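/- Let U and V be finite-dimensional vector spaces over a field K and S a linear subspace of L(U,V). Assume that dim S⊥y > 1 for some y ∈ V, where S⊥y = {t(y) : t ∈ S⊥}. Then there exists a nonzero quadratic form q on V such that dim S⊥z ≥ 2 for every z ∈ V with q(z) ≠ 0. -/

import Mathlib

/-- The orthogonal `S⊥` of a subspace `S ⊆ L(U,V)` with respect to the trace bilinear
form `(s, t) ↦ tr (t ∘ s)`: the space of all `t : V →ₗ[K] U` with `tr (t ∘ s) = 0` for
every `s ∈ S`. -/
def tracePerp {K U V : Type*} [Field K] [AddCommGroup U] [Module K U]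
    [AddCommGroup V] [Module K V] (S : Submodule K (U →ₗ[K] V)) :
    Submodule K (V →ₗ[K] U) where
  carrier := {t | ∀ s ∈ S, LinearMap.trace K U (t ∘ₗ s) = 0}
  add_mem' := fun {a b} ha hb s hs => by
    simp only [LinearMap.add_comp, map_add, ha s hs, hb s hs, add_zero]
  zero_mem' := fun s hs => by simp
  smul_mem' := fun c t ht s hs => by
    simp only [LinearMap.smul_comp, map_smul, ht s hs, smul_zero]

/-- Let `S` be a linear subspace of `L(U,V)` such that
`dim S⊥y > 1` for some `y ∈ V` (with `S⊥y = {t y : t ∈ S⊥}`). Then there exists a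
nonzero quadratic form `q` on `V` with `dim S⊥z ≥ 2` for every `z ∈ V` with
`q z ≠ 0`. -/
theorem exists_quadratic_form_detecting_large_perp_evaluations
    (K U V : Type*) [Field K]
    [AddCommGroup U] [Module K U] [FiniteDimensional K U]
    [AddCommGroup V] [Module K V] [FiniteDimensional K V]
    (S : Submodule K (U →ₗ[K] V))
    (h : ∃ y : V,
      1 < Module.finrank K (Submodule.map (LinearMap.applyₗ y) (tracePerp S))) :
    ∃ q : QuadraticForm K V, q ≠ 0 ∧ ∀ z : V, q z ≠ 0 →
      2 ≤ Module.finrank K (Submodule.map (LinearMap.applyₗ z) (tracePerp S)) := by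
  obtain ⟨y, hy⟩ := h
  set W := Submodule.map (LinearMap.applyₗ y) (tracePerp S) with hW
  let b := Module.finBasis K W
  let i0 : Fin (Module.finrank K W) := ⟨0, by omega⟩
  let i1 : Fin (Module.finrank K W) := ⟨1, hy⟩
  have hne : i0 ≠ i1 := by simp [i0, i1]
  obtain ⟨f, hf⟩ := LinearMap.exists_extend (b.coord i0)
  obtain ⟨g, hg⟩ := LinearMap.exists_extend (b.coord i1)
  obtain ⟨t1, ht1, e1⟩ := Submodule.mem_map.1 (b i0).2
  obtain ⟨t2, ht2, e2⟩ := Submodule.mem_map.1 (b i1).2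
  simp only [LinearMap.applyₗ_apply_apply] at e1 e2
  have f1 : f (t1 y) = 1 := by
    rw [e1]; have := LinearMap.congr_fun hf (b i0); simpa using this
  have f2 : f (t2 y) = 0 := by
    rw [e2]; have := LinearMap.congr_fun hf (b i1); simpa [hne.symm, hne] using this
  have g1 : g (t1 y) = 0 := by
    rw [e1]; have := LinearMap.congr_fun hg (b i0); simpa [hne.symm, hne] using this
  have g2 : g (t2 y) = 1 := by
    rw [e2]; have := LinearMap.congr_fun hg (b i1); simpa using this
  refine ⟨QuadraticMap.linMulLin (f ∘ₗ t1) (g ∘ₗ t2) -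
    QuadraticMap.linMulLin (f ∘ₗ t2) (g ∘ₗ t1), ?_, ?_⟩
  · intro h0
    have := congrArg (fun q : QuadraticForm K V => q y) h0
    simp [f1, f2, g1, g2] at this
  · intro z hz
    have hz' : f (t1 z) * g (t2 z) - f (t2 z) * g (t1 z) ≠ 0 := by simpa using hz
    have hli : LinearIndependent K ![t1 z, t2 z] := by
      rw [LinearIndependent.pair_iff]
      intro a c hac
      have hf' := congrArg f hac
      have hg' := congrArg g hac
      simp only [map_add, map_smul, smul_eq_mul, map_zero] at hf' hg'
      constructor
      · apply (mul_eq_zero.1 _).resolve_right hz'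
        linear_combination g (t2 z) * hf' - f (t2 z) * hg'
      · apply (mul_eq_zero.1 _).resolve_right hz'
        linear_combination f (t1 z) * hg' - g (t1 z) * hf'
    have hc := finrank_span_eq_card hli
    rw [Fintype.card_fin] at hc
    refine le_trans (le_of_eq hc.symm) ?_
    apply Submodule.finrank_mono
    rw [Submodule.span_le]
    rintro _ ⟨i, rfl⟩
    fin_cases i
    · exact ⟨t1, ht1, rfl⟩
    · exact ⟨t2, ht2, rfl⟩
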